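/- Let p be an odd prime, S a commutative ring of characteristic p, and R = S[T, T₁₁, T₁₂, T₂₂] the polynomial ring in four variables. For ij ∈ {11, 12, 22} let D_ij : R → R be the S-linear operator D_ij(f) = (T_ij + 1)·∂f/∂T_ij. Define Θ₂(f) = 2T^{p+1}·D₁₁(f) − (T + T^p)·D₁₂(f) + 2·D₂₂(f) and, for N ∈ ℤ, θ₄⁽ᴺ⁾(f) = (T − T^p)·∂f/∂T + N·f. Then the p-fold composite of Θ₂ satisfies Θ₂^p(f) = 2·T^{p(p+1)}·D₁₁(f) − (T^p + T^{p²})·D₁₂(f) + 2·D₂₂(f) for all f, and consequently Θ₂^p ∘ θ₄⁽ᴺ⁾ = θ₄⁽ᴺ⁾ ∘ Θ₂^p for every N ∈ ℤ. -/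

import Mathlib

open MvPolynomial

/-- The operator `D_ij : f ↦ (T_ij + 1)·∂f/∂T_ij` on `S[T, T₁₁, T₁₂, T₂₂]`,
with the variables indexed by `Fin 4` as `0 ↦ T`, `1 ↦ T₁₁`, `2 ↦ T₁₂`, `3 ↦ T₂₂`. -/
noncomputable def Dij {S : Type*} [CommRing S] (i : Fin 4) (f : MvPolynomial (Fin 4) S) :
    MvPolynomial (Fin 4) S :=
  (X i + 1) * pderiv i f

/-- `Θ₁ f = T²·D₁₁ f − T·D₁₂ f + D₂₂ f`. -/
noncomputable def Theta1 {S : Type*} [CommRing S] (f : MvPolynomial (Fin 4) S) :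
    MvPolynomial (Fin 4) S :=
  X 0 ^ 2 * Dij 1 f - X 0 * Dij 2 f + Dij 3 f

/-- `Θ₂ f = 2T^{p+1}·D₁₁ f − (T + T^p)·D₁₂ f + 2·D₂₂ f`. -/
noncomputable def Theta2 {S : Type*} [CommRing S] (p : ℕ) (f : MvPolynomial (Fin 4) S) :
    MvPolynomial (Fin 4) S :=
  2 * X 0 ^ (p + 1) * Dij 1 f - (X 0 + X 0 ^ p) * Dij 2 f + 2 * Dij 3 f

/-- `Θ₃ f = T^{2p}·D₁₁ f − T^p·D₁₂ f + D₂₂ f`. -/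
noncomputable def Theta3 {S : Type*} [CommRing S] (p : ℕ) (f : MvPolynomial (Fin 4) S) :
    MvPolynomial (Fin 4) S :=
  X 0 ^ (2 * p) * Dij 1 f - X 0 ^ p * Dij 2 f + Dij 3 f

/-- `θ₄⁽ᴺ⁾ f = (T − T^p)·∂f/∂T + N·f`. -/
noncomputable def theta4 {S : Type*} [CommRing S] (p : ℕ) (N : ℤ) (f : MvPolynomial (Fin 4) S) :
    MvPolynomial (Fin 4) S :=
  (X 0 - X 0 ^ p) * pderiv 0 f + (N : MvPolynomial (Fin 4) S) * f

/-!
In characteristic `p` the `p`-th iterate of a derivation is again a derivation, since the inner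
binomial coefficients in the iterated Leibniz rule vanish. It is therefore determined by its values
on the variables. Now `Θ₂` is a derivation killing `T` for which each `T_ij + 1` is an eigenvector
with eigenvalue a polynomial in `T`; so `Θ₂^p` kills `T` and has the same eigenvectors, with the
`p`-th powers of the eigenvalues. For the second claim, `θ₄⁽ᴺ⁾` is a derivation plus a constant, and
every derivation kills these `p`-th powers, so the two operators commute on the variables.
-/

section Derivation

open Finset.HasAntidiagonal (antidiagonal mem_antidiagonal)

variable {R A : Type*} [CommSemiring R] [CommSemiring A] [Algebra R A]
  (D : Derivation R A A)

theorem derivation_iterate_mul (n : ℕ) (a b : A) :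
    D^[n] (a * b) =
      ∑ ij ∈ antidiagonal n, n.choose ij.1 • (D^[ij.1] a * D^[ij.2] b) := by
  induction n with
  | zero => simp
  | succ n ih =>
    rw [Finset.sum_antidiagonal_choose_succ_nsmul (fun i j => D^[i] a * D^[j] b) n,
      Function.iterate_succ_apply', ih]
    simp only [map_sum, map_nsmul, D.leibniz, smul_eq_mul, nsmul_add, Finset.sum_add_distrib,
      Function.iterate_succ_apply', mul_comm (D^[_] b)]
    congr 1
    refine Finset.sum_congr rfl fun ij hij => ?_
    rw [n.choose_symm_of_eq_add (mem_antidiagonal.mp hij).symm]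

theorem derivation_iterate_eq_pow_mul {a v : A} (ha : D a = 0) (hv : D v = a * v) (n : ℕ) :
    D^[n] v = a ^ n * v := by
  induction n with
  | zero => simp
  | succ n ih =>
    rw [Function.iterate_succ_apply', ih, D.leibniz, D.leibniz_pow, ha, hv]
    simp only [smul_eq_mul]
    ring

variable (p : ℕ) [CharP A p]

theorem derivation_pow_char_eq_zero (a : A) : D (a ^ p) = 0 := by
  rw [D.leibniz_pow, nsmul_eq_mul, CharP.cast_eq_zero, zero_mul]

variable [Fact p.Prime]

theorem derivation_iterate_char_mul (a b : A) :
    D^[p] (a * b) = a * D^[p] b + b * D^[p] a := by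
  have hp : p.Prime := Fact.out
  have inner_terms : ∀ ij ∈ antidiagonal p, ij ≠ (0, p) ∧ ij ≠ (p, 0) →
      p.choose ij.1 • (D^[ij.1] a * D^[ij.2] b) = 0 := by
    rintro ⟨i, j⟩ hij ⟨h0, hp'⟩
    rw [mem_antidiagonal] at hij
    have hdvd : p ∣ p.choose i := hp.dvd_choose_self (by grind) (by grind)
    rw [nsmul_eq_mul, (CharP.cast_eq_zero_iff A p _).mpr hdvd, zero_mul]
  rw [derivation_iterate_mul, Finset.sum_eq_add_of_mem (0, p) (p, 0) (by simp) (by simp)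
    (by simp [hp.ne_zero.symm]) inner_terms]
  simp [mul_comm]

/-- The `p`-th iterate of a derivation in characteristic `p`, as a derivation: the `p`-operation
of the restricted Lie algebra of derivations. -/
def derivationPowChar : Derivation R A A where
  toLinearMap := (D : A →ₗ[R] A) ^ p
  map_one_eq_zero' := by
    have h : D^[p] 1 = 0 ^ p * 1 := derivation_iterate_eq_pow_mul D (map_zero D) (by simp) p
    rwa [zero_pow (Fact.out : p.Prime).ne_zero, zero_mul, ← Derivation.coeFn_coe,
      ← Module.End.pow_apply] at h
  leibniz' a b := by
    simp only [Module.End.pow_apply]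
    exact derivation_iterate_char_mul D p a b

theorem coe_derivationPowChar : ⇑(derivationPowChar D p) = D^[p] :=
  Module.End.coe_pow _ p

end Derivation

theorem mvPolynomial_derivation_commute {σ R : Type*} [CommRing R]
    {D E : Derivation R (MvPolynomial σ R) (MvPolynomial σ R)}
    (h : ∀ i, D (E (X i)) = E (D (X i))) : Function.Commute D E := by
  have lie_eq_zero : ⁅D, E⁆ = 0 := derivation_ext fun i => by
    rw [Derivation.commutator_apply, h, sub_self, Derivation.zero_apply]
  intro f
  rw [← sub_eq_zero, ← Derivation.commutator_apply, lie_eq_zero, Derivation.zero_apply]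

section LogDerivation

variable {σ S : Type*} [CommRing S]

/-- The logarithmic derivation `∑ i, a i * (X i + 1) * ∂/∂X i`, encoded by its values on the
variables: each Serre–Tate parameter `X i + 1` is an eigenvector with eigenvalue `a i`. -/
noncomputable def logDerivation (a : σ → MvPolynomial σ S) :
    Derivation S (MvPolynomial σ S) (MvPolynomial σ S) :=
  mkDerivation S fun i => a i * (X i + 1)

theorem logDerivation_X (a : σ → MvPolynomial σ S) (i : σ) :
    logDerivation a (X i) = a i * (X i + 1) :=
  mkDerivation_X S _ i

theorem logDerivation_X_eq_zero {a : σ → MvPolynomial σ S} {i : σ} (hi : a i = 0) :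
    logDerivation a (X i) = 0 := by
  rw [logDerivation_X, hi, zero_mul]

theorem logDerivation_X_add_one (a : σ → MvPolynomial σ S) (i : σ) :
    logDerivation a (X i + 1) = a i * (X i + 1) := by
  rw [map_add, Derivation.map_one_eq_zero, add_zero, logDerivation_X]

variable (p : ℕ) [CharP S p] {a : σ → MvPolynomial σ S}

theorem logDerivation_iterate_char [Fact p.Prime] (ha : ∀ i, logDerivation a (a i) = 0) :
    (logDerivation a)^[p] = logDerivation (a ^ p) := by
  suffices h : derivationPowChar (logDerivation a) p = logDerivation (a ^ p) by
    rw [← coe_derivationPowChar, h]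
  refine derivation_ext fun i => ?_
  calc derivationPowChar (logDerivation a) p (X i)
      = derivationPowChar (logDerivation a) p (X i + 1) := by
        rw [map_add, Derivation.map_one_eq_zero, add_zero]
    _ = a i ^ p * (X i + 1) := by
        rw [coe_derivationPowChar,
          derivation_iterate_eq_pow_mul _ (ha i) (logDerivation_X_add_one a i)]
    _ = logDerivation (a ^ p) (X i) := by rw [logDerivation_X, Pi.pow_apply]

theorem logDerivation_pow_char_commute {E : Derivation S (MvPolynomial σ S) (MvPolynomial σ S)}
    (hE : ∀ i, logDerivation (a ^ p) (E (X i)) = a i ^ p * E (X i)) :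
    Function.Commute (logDerivation (a ^ p)) E :=
  mvPolynomial_derivation_commute fun i => by
    rw [hE, logDerivation_X, Pi.pow_apply, E.leibniz, derivation_pow_char_eq_zero, map_add,
      E.map_one_eq_zero, smul_zero, add_zero, add_zero, smul_eq_mul]

end LogDerivation

section Theta

variable {S : Type*} [CommRing S]

theorem logDerivation_vecCons_apply (a b c f : MvPolynomial (Fin 4) S) :
    logDerivation ![0, a, -b, c] f = a * Dij 1 f - b * Dij 2 f + c * Dij 3 f := by
  have h : logDerivation ![0, a, -b, c] = a • (X 1 + 1 : MvPolynomial (Fin 4) S) • pderiv 1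
      - b • (X 2 + 1 : MvPolynomial (Fin 4) S) • pderiv 2
      + c • (X 3 + 1 : MvPolynomial (Fin 4) S) • pderiv 3 := by
    refine derivation_ext fun i => ?_
    rw [logDerivation_X, Derivation.add_apply, Derivation.sub_apply]
    simp only [Derivation.smul_apply, smul_eq_mul, pderiv_X]
    fin_cases i <;> simp
  rw [h]
  rfl

/-- The eigenvalues of `Θ₂` on `T + 1, T₁₁ + 1, T₁₂ + 1, T₂₂ + 1`. -/
noncomputable def theta2Eigenvalue (S : Type*) [CommRing S] (p : ℕ) :
    Fin 4 → MvPolynomial (Fin 4) S :=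
  ![0, 2 * X 0 ^ (p + 1), -(X 0 + X 0 ^ p), 2]

theorem Theta2_eq_logDerivation (p : ℕ) :
    Theta2 (S := S) p = logDerivation (theta2Eigenvalue S p) :=
  funext fun f => (logDerivation_vecCons_apply _ _ _ f).symm

theorem logDerivation_theta2Eigenvalue (p : ℕ) (i : Fin 4) :
    logDerivation (theta2Eigenvalue S p) (theta2Eigenvalue S p i) = 0 := by
  set D := logDerivation (theta2Eigenvalue S p)
  have map_T : D (X 0) = 0 := logDerivation_X_eq_zero rfl
  have map_two : D 2 = 0 := D.map_natCast 2
  fin_cases i <;> simp [theta2Eigenvalue, D.leibniz_pow, map_T, map_two]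

variable (p : ℕ) [Fact p.Prime] [CharP S p]

theorem theta2Eigenvalue_pow_char :
    theta2Eigenvalue S p ^ p =
      ![0, 2 * X 0 ^ (p * (p + 1)), -(X 0 ^ p + X 0 ^ (p ^ 2)), 2] := by
  have two_pow : (2 : MvPolynomial (Fin 4) S) ^ p = 2 := map_ofNat (frobenius _ p) 2
  have neg_pow_char (b : MvPolynomial (Fin 4) S) : (-b) ^ p = -b ^ p := map_neg (frobenius _ p) b
  funext i
  fin_cases i
  · simp [theta2Eigenvalue, (Fact.out : p.Prime).ne_zero]
  · simp [theta2Eigenvalue, mul_pow, two_pow, ← pow_mul, mul_comm p]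
  · simp [theta2Eigenvalue, neg_pow_char, add_pow_char, ← pow_mul, sq]
  · simp [theta2Eigenvalue, two_pow]

theorem Theta2_iterate_char :
    (Theta2 (S := S) p)^[p] = logDerivation (theta2Eigenvalue S p ^ p) := by
  rw [Theta2_eq_logDerivation, logDerivation_iterate_char p (logDerivation_theta2Eigenvalue p)]

theorem logDerivation_theta2Eigenvalue_pow_commute_theta4 (N : ℤ) :
    Function.Commute (logDerivation (theta2Eigenvalue S p ^ p)) (theta4 p N) := by
  set D := logDerivation (theta2Eigenvalue S p ^ p)
  let E : Derivation S (MvPolynomial (Fin 4) S) (MvPolynomial (Fin 4) S) :=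
    (X 0 - X 0 ^ p : MvPolynomial (Fin 4) S) • pderiv 0
  have commute_E : Function.Commute D E := logDerivation_pow_char_commute p fun i => by
    change D (E (X i)) = theta2Eigenvalue S p i ^ p * E (X i)
    fin_cases i
    · have eigenvalue_zero : theta2Eigenvalue S p 0 ^ p = 0 :=
        zero_pow (Fact.out : p.Prime).ne_zero
      have map_T : D (X 0) = 0 := logDerivation_X_eq_zero eigenvalue_zero
      simp [E, D.leibniz_pow, map_T, eigenvalue_zero]
    all_goals simp [E, pderiv_X]
  intro f
  calc D (E f + N * f) = D (E f) + N * D f := by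
        rw [map_add, D.leibniz, D.map_intCast, smul_zero, add_zero, smul_eq_mul]
    _ = E (D f) + N * D f := by rw [commute_E f]

end Theta

theorem stmt_17_general (p : ℕ) (hp : p.Prime) (S : Type*) [CommRing S] [CharP S p] :
    (∀ f : MvPolynomial (Fin 4) S,
        (Theta2 (S := S) p)^[p] f
          = 2 * X 0 ^ (p * (p + 1)) * Dij 1 f - (X 0 ^ p + X 0 ^ (p ^ 2)) * Dij 2 f
              + 2 * Dij 3 f)
      ∧ ∀ (N : ℤ) (f : MvPolynomial (Fin 4) S),
          (Theta2 (S := S) p)^[p] (theta4 p N f) = theta4 p N ((Theta2 (S := S) p)^[p] f) := by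
  have := Fact.mk hp
  rw [Theta2_iterate_char p]
  refine ⟨fun f => ?_, fun N => logDerivation_theta2Eigenvalue_pow_commute_theta4 p N⟩
  rw [theta2Eigenvalue_pow_char, logDerivation_vecCons_apply]

/-- Let `p` be an odd prime and `S` a commutative ring of characteristic `p`.  Then the
`p`-fold composite of `Θ₂` satisfies
`Θ₂^p f = 2·T^{p(p+1)}·D₁₁ f − (T^p + T^{p²})·D₁₂ f + 2·D₂₂ f` for every `f`, and
consequently `Θ₂^p` commutes with `θ₄⁽ᴺ⁾` for every `N : ℤ`. -/
theorem stmt_17 (p : ℕ) (hp : p.Prime) (hodd : Odd p)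
    (S : Type*) [CommRing S] [CharP S p] :
    (∀ f : MvPolynomial (Fin 4) S,
        (Theta2 (S := S) p)^[p] f
          = 2 * X 0 ^ (p * (p + 1)) * Dij 1 f - (X 0 ^ p + X 0 ^ (p ^ 2)) * Dij 2 f
              + 2 * Dij 3 f)
      ∧ ∀ (N : ℤ) (f : MvPolynomial (Fin 4) S),
          (Theta2 (S := S) p)^[p] (theta4 p N f) = theta4 p N ((Theta2 (S := S) p)^[p] f) :=
  stmt_17_general p hp S
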